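/- Let T denote the set of n×n lower triangular real matrices. Let L̄ ∈ T and b̄ ∈ ℝⁿ with ‖L̄‖_max ≤ 1 and ‖b̄‖_∞ ≤ 1, σ > 0, and let L ~ N_T(L̄, σ²Id) and b ~ N(b̄, σ²Id) be independent (only the entries l_{ij} with i ≥ j are random Gaussians N(l̄_{ij}, σ²); entries above the diagonal are zero). Then for every real t > n(n+1), Prob{ c(L,b) > t } ≤ ((1 + σ)/σ)·(n³(n+1)²/(t − n(n+1)))·√(2/π), where c(L,b) = max_{k ∈ [n]} c_k(L,b) and c_k(L,b) is the componentwise condition number of the map (L,b) ↦ (L⁻¹b)_k at (L,b) (L is almost surely invertible). -/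

import Mathlib

open MeasureTheory ProbabilityTheory
open scoped ENNReal

/-- Componentwise "distance" `d(u,v) = ‖(u−v)/v‖_∞`, valued in `[0,∞]`:
the `i`-th component of the quotient is `|u i − v i|/|v i|` if `v i ≠ 0`,
`0` if `u i = v i = 0`, and `∞` otherwise. -/
noncomputable def cwDist {ι : Type*} (u v : ι → ℝ) : ℝ≥0∞ :=
  ⨆ i, if v i ≠ 0 then ENNReal.ofReal (|u i - v i| / |v i|)
       else if u i = v i then 0 else ⊤

/-- Componentwise condition number of `F : D ⊆ ℝ^ι → ℝ^κ` at `a`: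
`c^F(a) = lim_{δ→0} sup { d(F x, F a)/d(x,a) : x ∈ D, d(x,a) ≤ δ, x ≠ a }`,
the limit being an infimum since the sup is monotone in `δ`. -/
noncomputable def cwCond {ι κ : Type*} (D : Set (ι → ℝ)) (F : (ι → ℝ) → κ → ℝ)
    (a : ι → ℝ) : ℝ≥0∞ :=
  ⨅ δ ∈ Set.Ioi (0 : ℝ≥0∞),
    ⨆ x ∈ {x ∈ D | cwDist x a ≤ δ ∧ x ≠ a}, cwDist (F x) (F a) / cwDist x a

/-- A matrix viewed as a point of `ℝ^(n×n)`. -/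
def matToFun {n : ℕ} (A : Matrix (Fin n) (Fin n) ℝ) : Fin n × Fin n → ℝ :=
  fun p => A p.1 p.2

/-- A point of `ℝ^(n×n)` viewed as a matrix. -/
def funToMat {n : ℕ} (x : Fin n × Fin n → ℝ) : Matrix (Fin n) (Fin n) ℝ :=
  Matrix.of fun i j => x (i, j)

/-- The componentwise condition number `c^det(A)` of determinant computation at `A`. -/
noncomputable def cDet {n : ℕ} (A : Matrix (Fin n) (Fin n) ℝ) : ℝ≥0∞ :=
  cwCond Set.univ (fun x (_ : Unit) => (funToMat x).det) (matToFun A)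

/-- The componentwise condition number `c†_{kl}(A)` of the map `A ↦ (A⁻¹)_{kl}` at `A`. -/
noncomputable def cInv {n : ℕ} (k l : Fin n) (A : Matrix (Fin n) (Fin n) ℝ) : ℝ≥0∞ :=
  cwCond {x | IsUnit (funToMat x).det}
    (fun x (_ : Unit) => (funToMat x)⁻¹ k l) (matToFun A)

/-- `c†(A) = max_{k,l} c†_{kl}(A)`. -/
noncomputable def cInvMax {n : ℕ} (A : Matrix (Fin n) (Fin n) ℝ) : ℝ≥0∞ :=
  ⨆ k, ⨆ l, cInv k l A

/-- A pair (matrix, right-hand side) viewed as a point of `ℝ^(n×n+n)`. -/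
def pairToFun {n : ℕ} (A : Matrix (Fin n) (Fin n) ℝ) (b : Fin n → ℝ) :
    (Fin n × Fin n) ⊕ Fin n → ℝ :=
  Sum.elim (fun p => A p.1 p.2) b

def funToMat' {n : ℕ} (x : (Fin n × Fin n) ⊕ Fin n → ℝ) : Matrix (Fin n) (Fin n) ℝ :=
  Matrix.of fun i j => x (Sum.inl (i, j))

def funToVec {n : ℕ} (x : (Fin n × Fin n) ⊕ Fin n → ℝ) : Fin n → ℝ :=
  fun i => x (Sum.inr i)

/-- The componentwise condition number `c_k(A,b)` of the map `(A,b) ↦ (A⁻¹b)_k` at `(A,b)`. -/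
noncomputable def cLin {n : ℕ} (k : Fin n) (A : Matrix (Fin n) (Fin n) ℝ)
    (b : Fin n → ℝ) : ℝ≥0∞ :=
  cwCond {x | IsUnit (funToMat' x).det}
    (fun x (_ : Unit) => (Matrix.mulVec (funToMat' x)⁻¹ (funToVec x)) k) (pairToFun A b)

/-- `c(A,b) = max_k c_k(A,b)`. -/
noncomputable def cLinMax {n : ℕ} (A : Matrix (Fin n) (Fin n) ℝ) (b : Fin n → ℝ) : ℝ≥0∞ :=
  ⨆ k, cLin k A b

instance matrixMeasurableSpace {n : ℕ} : MeasurableSpace (Matrix (Fin n) (Fin n) ℝ) :=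
  inferInstanceAs (MeasurableSpace (Fin n → Fin n → ℝ))

/-- The distribution `N_S(Ā, σ²Id)` of a random sparse matrix: the entries `a_{ij}` with
`(i,j) ∈ S` are independent Gaussians `N(ā_{ij}, σ²)`, and `a_{ij} = 0` for `(i,j) ∉ S`. -/
noncomputable def sparseGaussian {n : ℕ} (S : Finset (Fin n × Fin n))
    (Abar : Matrix (Fin n) (Fin n) ℝ) (σ : ℝ) : Measure (Matrix (Fin n) (Fin n) ℝ) :=
  (Measure.pi fun p : S => gaussianReal (Abar p.1.1 p.1.2) ⟨σ ^ 2, sq_nonneg σ⟩).map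
    fun g => Matrix.of fun i j => if h : (i, j) ∈ S then g ⟨(i, j), h⟩ else 0

/-- The distribution `N(b̄, σ²Id)` on `ℝⁿ`: independent Gaussian entries `N(b̄_i, σ²)`. -/
noncomputable def vecGaussian {n : ℕ} (bbar : Fin n → ℝ) (σ : ℝ) : Measure (Fin n → ℝ) :=
  Measure.pi fun i => gaussianReal (bbar i) ⟨σ ^ 2, sq_nonneg σ⟩

/-- `S ⊆ [n]²` is admissible when `M_S` contains an invertible matrix. -/
def Admissible {n : ℕ} (S : Finset (Fin n × Fin n)) : Prop :=
  ∃ B : Matrix (Fin n) (Fin n) ℝ, (∀ i j, (i, j) ∉ S → B i j = 0) ∧ IsUnit B.det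

/-- The lower-triangular sparsity pattern `{(i,j) ∈ [n]² : i ≥ j}`. -/
def triPattern (n : ℕ) : Finset (Fin n × Fin n) :=
  Finset.univ.filter fun p => p.2 ≤ p.1

/-!
By Cramer's rule `(L⁻¹b)_k` is a quotient of two determinants, so `c_k(L, b)` is at most the sum,
over all entries, of the absolute elasticities of numerator and denominator. The denominator is the
product of the diagonal entries of `L`, which contribute `1` each. The numerator `p` is affine in
each entry: as a function of one entry `x` it is `α x + β`, with elasticity `α x / (α x + β)`. This
exceeds `s > 1` in absolute value only if `x` is `s` times closer to the root `-β / α` of `p` than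
to `0`. Such points form an interval that is short compared with `|x|`, while `|x|` times the
Gaussian density is bounded, so its probability is `O(1 / (s - 1))` uniformly in `α` and `β`.
A union bound over `k` and over the at most `n ^ 2` entries on which `p` depends, with
`s = (t - n) / n ^ 2`, gives the theorem.
-/

open scoped Topology

lemma extend_update_of_injective {ι κ α : Type*} [DecidableEq κ] [DecidableEq ι] {ψ : κ → ι}
    (hψ : Function.Injective ψ) (ω : κ → α) (g : ι → α) (e : κ) (x : α) :
    Function.extend ψ (Function.update ω e x) g
      = Function.update (Function.extend ψ ω g) (ψ e) x := by
  ext i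
  by_cases hi : ∃ d, ψ d = i
  · obtain ⟨d, rfl⟩ := hi
    simp [hψ.extend_apply, Function.update_apply, hψ.eq_iff]
  · rw [Function.extend_apply' _ _ _ hi, Function.update_of_ne fun h => hi ⟨e, h.symm⟩,
      Function.extend_apply' _ _ _ hi]

section ComponentwiseCondition

variable {ι κ : Type*}

lemma cwDist_le_coe_iff {u v : ι → ℝ} {η : NNReal} :
    cwDist u v ≤ η ↔ ∀ i, |u i - v i| ≤ η * |v i| := by
  rw [cwDist, iSup_le_iff]
  refine forall_congr' fun i => ?_
  by_cases hv : v i = 0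
  · by_cases hu : u i = 0 <;> simp [hu, hv]
  · rw [if_pos hv, ENNReal.ofReal_le_coe, div_le_iff₀ (abs_pos.2 hv)]

lemma cwCond_le_of_forall_cwDist_le {D : Set (ι → ℝ)} {F : (ι → ℝ) → κ → ℝ} {a : ι → ℝ}
    {C δ : ℝ≥0∞} (hδ : 0 < δ)
    (h : ∀ x, cwDist x a ≤ δ → cwDist (F x) (F a) ≤ C * cwDist x a) :
    cwCond D F a ≤ C :=
  iInf₂_le_of_le δ hδ <| iSup₂_le fun x hx => ENNReal.div_le_of_le_mul (h x hx.2.1)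

lemma norm_sub_le_of_cwDist_le [Fintype ι] {x a : ι → ℝ} {η : NNReal} (h : cwDist x a ≤ η) :
    ‖x - a‖ ≤ η * ‖a‖ :=
  (pi_norm_le_iff_of_nonneg (by positivity)).2 fun i =>
    (cwDist_le_coe_iff.1 h i).trans (by gcongr; exact norm_le_pi_norm a i)

lemma exists_forall_cwDist_le_of_eventually_nhds [Finite ι] {a : ι → ℝ} {P : (ι → ℝ) → Prop}
    (h : ∀ᶠ x in 𝓝 a, P x) : ∃ δ : NNReal, 0 < δ ∧ ∀ x, cwDist x a ≤ δ → P x := by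
  have := Fintype.ofFinite ι
  obtain ⟨r, hr, hP⟩ := Metric.eventually_nhds_iff.1 h
  refine ⟨⟨r / (‖a‖ + 1), by positivity⟩, show 0 < r / (‖a‖ + 1) by positivity,
    fun x hx => hP ?_⟩
  calc dist x a = ‖x - a‖ := dist_eq_norm x a
    _ ≤ r / (‖a‖ + 1) * ‖a‖ := norm_sub_le_of_cwDist_le hx
    _ < r := by rw [div_mul_eq_mul_div, div_lt_iff₀ (by positivity)]; linarith

variable [DecidableEq ι]

/-- The elasticity (relative partial derivative) `a_e ∂_e f(a) / f(a)` of `f` at `a` with respect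
to the coordinate `e`; the componentwise condition number is the sum of their absolute values.
The partial derivative is encoded as a derivative along `Function.update`, so the definition makes
sense for infinitely many coordinates, and it is `0` when `f a = 0`. -/
noncomputable def elasticity (f : (ι → ℝ) → ℝ) (a : ι → ℝ) (e : ι) : ℝ :=
  a e * logDeriv (fun x => f (Function.update a e x)) (a e)

lemma hasDerivAt_comp_update [Finite ι] {f : (ι → ℝ) → ℝ} {a : ι → ℝ}
    (hf : DifferentiableAt ℝ f a) (e : ι) :
    HasDerivAt (fun x => f (Function.update a e x)) (fderiv ℝ f a (Pi.single e 1)) (a e) := by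
  have := Fintype.ofFinite ι
  exact HasFDerivAt.comp_hasDerivAt (a e) (by simpa using hf.hasFDerivAt)
    (hasDerivAt_update a e (a e))

lemma abs_fderiv_apply_le_of_cwDist_le [Fintype ι] {f : (ι → ℝ) → ℝ} {x a : ι → ℝ}
    (hf : DifferentiableAt ℝ f a) (hfa : f a ≠ 0) {η : NNReal} (h : cwDist x a ≤ η) :
    |fderiv ℝ f a (x - a)| ≤ η * ((∑ e, |elasticity f a e|) * |f a|) := by
  have partial_eq (e : ι) :
      |a e| * |fderiv ℝ f a (Pi.single e 1)| = |elasticity f a e| * |f a| := by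
    rw [elasticity, logDeriv_apply, (hasDerivAt_comp_update hf e).deriv,
      Function.update_eq_self, ← abs_mul, ← abs_mul, mul_assoc, div_mul_cancel₀ _ hfa]
  calc |fderiv ℝ f a (x - a)|
      = |∑ e, (x e - a e) * fderiv ℝ f a (Pi.single e 1)| := by
        have single_smul (e : ι) : Pi.single e ((x - a) e) = (x - a) e • Pi.single e (1 : ℝ) := by
          rw [← Pi.single_smul, smul_eq_mul, mul_one]
        conv_lhs => rw [← Finset.univ_sum_single (x - a)]
        simp_rw [single_smul, map_sum, map_smul, smul_eq_mul, Pi.sub_apply]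
    _ ≤ ∑ e, |x e - a e| * |fderiv ℝ f a (Pi.single e 1)| := by
        simp_rw [← abs_mul]; exact Finset.abs_sum_le_sum_abs _ _
    _ ≤ ∑ e, η * |a e| * |fderiv ℝ f a (Pi.single e 1)| := by
        gcongr with e; exact cwDist_le_coe_iff.1 h e
    _ = η * ((∑ e, |elasticity f a e|) * |f a|) := by
        simp_rw [mul_assoc, partial_eq, Finset.sum_mul, Finset.mul_sum]

theorem cwCond_le_sum_abs_elasticity [Fintype ι] (D : Set (ι → ℝ)) {f : (ι → ℝ) → ℝ} {a : ι → ℝ}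
    (hf : DifferentiableAt ℝ f a) (hfa : f a ≠ 0) :
    cwCond D (fun x (_ : Unit) => f x) a ≤ ENNReal.ofReal (∑ e, |elasticity f a e|) := by
  set B : NNReal := ⟨∑ e, |elasticity f a e|, by positivity⟩
  change _ ≤ ENNReal.ofReal B
  rw [ENNReal.ofReal_coe_nnreal]
  refine ENNReal.le_of_forall_pos_le_add fun ε hε _ => ?_
  have remainder := (hasFDerivAt_iff_isLittleO.1 hf.hasFDerivAt).def
    (c := ε * |f a| / (‖a‖ + 1)) (by positivity)
  obtain ⟨δ, hδ, hball⟩ := exists_forall_cwDist_le_of_eventually_nhds remainder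
  refine cwCond_le_of_forall_cwDist_le (ENNReal.coe_pos.2 hδ) fun x hx => ?_
  obtain ⟨η, hη⟩ : ∃ η : NNReal, (η : ℝ≥0∞) = cwDist x a :=
    ⟨_, ENNReal.coe_toNNReal (ne_top_of_le_ne_top ENNReal.coe_ne_top hx)⟩
  have linear_part := abs_fderiv_apply_le_of_cwDist_le hf hfa hη.ge
  have remainder_part : |f x - f a - fderiv ℝ f a (x - a)| ≤ η * (ε * |f a|) :=
    calc |f x - f a - fderiv ℝ f a (x - a)|
        ≤ ε * |f a| / (‖a‖ + 1) * ‖x - a‖ := hball x hx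
      _ ≤ ε * |f a| / (‖a‖ + 1) * (η * (‖a‖ + 1)) := by
          gcongr
          exact (norm_sub_le_of_cwDist_le hη.ge).trans (by gcongr; linarith)
      _ = η * (ε * |f a|) := by field_simp
  rw [← hη, ← ENNReal.coe_add, ← ENNReal.coe_mul, cwDist_le_coe_iff]
  intro _
  calc |f x - f a| ≤ |f x - f a - fderiv ℝ f a (x - a)| + |fderiv ℝ f a (x - a)| := by
        simpa using abs_add_le (f x - f a - fderiv ℝ f a (x - a)) (fderiv ℝ f a (x - a))
    _ ≤ η * (ε * |f a|) + η * (B * |f a|) := add_le_add remainder_part linear_part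
    _ = (B + ε) * η * |f a| := by ring

lemma elasticity_div [Finite ι] {f g : (ι → ℝ) → ℝ} {a : ι → ℝ}
    (hf : DifferentiableAt ℝ f a) (hg : DifferentiableAt ℝ g a) (hfa : f a ≠ 0) (hga : g a ≠ 0)
    (e : ι) : elasticity (fun x => f x / g x) a e = elasticity f a e - elasticity g a e := by
  rw [elasticity, elasticity, elasticity, ← mul_sub]
  exact congrArg _ <| logDeriv_div _ (by simpa) (by simpa)
    (hasDerivAt_comp_update hf e).differentiableAt (hasDerivAt_comp_update hg e).differentiableAt

lemma elasticity_comp_extend [DecidableEq κ] {ψ : κ → ι} (hψ : Function.Injective ψ)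
    (f : (ι → ℝ) → ℝ) (g : ι → ℝ) (ω : κ → ℝ) (e : κ) :
    elasticity (fun ω => f (Function.extend ψ ω g)) ω e
      = elasticity f (Function.extend ψ ω g) (ψ e) := by
  simp only [elasticity, extend_update_of_injective hψ, hψ.extend_apply]

lemma sum_abs_elasticity_extend_zero [Fintype ι] [Fintype κ] [DecidableEq κ] {ψ : κ → ι}
    (hψ : Function.Injective ψ) (f : (ι → ℝ) → ℝ) (ω : κ → ℝ) :
    ∑ e, |elasticity f (Function.extend ψ ω 0) e|
      = ∑ e, |elasticity (fun ω => f (Function.extend ψ ω 0)) ω e| := by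
  symm
  refine Fintype.sum_of_injective ψ hψ _ _ (fun e he => ?_) fun e => by
    rw [elasticity_comp_extend hψ]
  rw [elasticity, Function.extend_apply' _ _ _ he, Pi.zero_apply, zero_mul, abs_zero]

end ComponentwiseCondition

section Multiaffine

variable {ι κ R : Type*} [DecidableEq ι] [CommRing R]

/-- A function of several variables is multiaffine if it is affine in each variable when the
others are fixed. -/
def IsMultiaffine (f : (ι → R) → R) : Prop :=
  ∀ a e, ∃ α β, ∀ x, f (Function.update a e x) = α * x + β

lemma IsMultiaffine.comp_extend [DecidableEq κ] {f : (ι → R) → R} (hf : IsMultiaffine f)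
    {ψ : κ → ι} (hψ : Function.Injective ψ) (g : ι → R) :
    IsMultiaffine fun ω => f (Function.extend ψ ω g) := fun ω e => by
  simpa only [extend_update_of_injective hψ] using hf (Function.extend ψ ω g) (ψ e)

lemma isMultiaffine_det {m : Type*} [Fintype m] [DecidableEq m] {φ : m → m → ι} {row : ι → m}
    (hrow : ∀ i j, row (φ i j) = i) :
    IsMultiaffine fun a : ι → R => (Matrix.of fun i j => a (φ i j)).det := by
  intro a e
  set M : Matrix m m R := Matrix.of fun i j => a (φ i j)
  set u : m → R := fun j => Function.update a e 0 (φ (row e) j)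
  set v : m → R := fun j => if φ (row e) j = e then 1 else 0
  refine ⟨(M.updateRow (row e) v).det, (M.updateRow (row e) u).det, fun x => ?_⟩
  have row_affine : (Matrix.of fun i j => Function.update a e x (φ i j))
      = M.updateRow (row e) (x • v + u) := by
    ext i j
    by_cases hi : i = row e
    · subst hi
      by_cases he : φ (row e) j = e <;> simp [u, v, he, Function.update_apply]
    · have he : φ i j ≠ e := fun h => hi (by rw [← h, hrow])
      simp [M, Matrix.updateRow_ne hi, Function.update_of_ne he]
  change (Matrix.of fun i j => Function.update a e x (φ i j)).det = _
  rw [row_affine, Matrix.det_updateRow_add, Matrix.det_updateRow_smul, mul_comm]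

lemma IsMultiaffine.subsingleton_update_eq_zero [IsDomain R] {f : (ι → R) → R}
    (hf : IsMultiaffine f) {a : ι → R} (ha : f a ≠ 0) (e : ι) :
    {x | f (Function.update a e x) = 0}.Subsingleton := by
  obtain ⟨α, β, h⟩ := hf a e
  have hfa : f a = α * a e + β := by simpa using h (a e)
  intro x (hx : f _ = 0) y (hy : f _ = 0)
  rw [h] at hx hy
  have hα : α ≠ 0 := by
    rintro rfl
    simp_all
  exact mul_left_cancel₀ hα (add_right_cancel (hx.trans hy.symm))

lemma IsMultiaffine.elasticity_eq {f : (ι → ℝ) → ℝ} (hf : IsMultiaffine f) (a : ι → ℝ) (e : ι) :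
    elasticity f a e = (f a - f (Function.update a e 0)) / f a := by
  obtain ⟨α, β, h⟩ := hf a e
  have hfa : f a = α * a e + β := by simpa using h (a e)
  simp only [elasticity, logDeriv_apply, h, ← hfa]
  simp [hfa]
  ring

end Multiaffine

section ProductMeasure

variable {ι : Type*} [Fintype ι] [DecidableEq ι]

lemma pi_le_of_forall_update_le {X : ι → Type*} [∀ i, MeasurableSpace (X i)]
    {μ : ∀ i, Measure (X i)} [∀ i, IsProbabilityMeasure (μ i)] {E : Set (∀ i, X i)}
    (hE : MeasurableSet E) (e : ι) {C : ℝ≥0∞}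
    (h : ∀ ω, μ e {x | Function.update ω e x ∈ E} ≤ C) : Measure.pi μ E ≤ C := by
  have slice_le : ∫⋯∫⁻_{e}, E.indicator 1 ∂μ ≤ ∫⋯∫⁻_{e}, (fun _ => C) ∂μ := by
    simp_rw [lmarginal_singleton, lintegral_const, measure_univ, mul_one]
    intro ω
    exact (lintegral_indicator_one (measurable_update ω hE)).trans_le (h ω)
  calc Measure.pi μ E = ∫⁻ ω, E.indicator 1 ω ∂Measure.pi μ := (lintegral_indicator_one hE).symm
    _ ≤ ∫⁻ _, C ∂Measure.pi μ :=
        lintegral_le_of_lmarginal_le {e} (measurable_one.indicator hE) measurable_const slice_le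
    _ = C := by simp

variable {f : (ι → ℝ) → ℝ} {μ : ι → Measure ℝ} [∀ i, IsProbabilityMeasure (μ i)]

theorem IsMultiaffine.ae_ne_zero [∀ i, NullSingletonClass (μ i)] (hf : IsMultiaffine f)
    (hfm : Measurable f) {a : ι → ℝ} (ha : f a ≠ 0) : ∀ᵐ ω ∂Measure.pi μ, f ω ≠ 0 := by
  suffices h : ∀ s : Finset ι, ∀ᵐ ω ∂Measure.pi μ, f (s.piecewise ω a) ≠ 0 by
    simpa using h Finset.univ
  intro s
  induction s using Finset.induction_on with
  | empty => simp [ha]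
  | insert e s he ih =>
    have hmeas (s : Finset ι) : Measurable fun ω => f (s.piecewise ω a) :=
      hfm.comp <| measurable_pi_lambda _ fun i => by
        by_cases hi : i ∈ s <;> simp only [Finset.piecewise, hi, if_true, if_false] <;> fun_prop
    have null : Measure.pi μ {ω | f (s.piecewise ω a) ≠ 0 ∧ f ((insert e s).piecewise ω a) = 0}
        = 0 := by
      refine nonpos_iff_eq_zero.1 <| pi_le_of_forall_update_le ((hmeas s
        (measurableSet_singleton 0).compl).inter (hmeas _ (measurableSet_singleton 0))) e
        fun ω => (Set.Subsingleton.measure_zero ?_ _).le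
      have slice (x : ℝ) : s.piecewise (Function.update ω e x) a = s.piecewise ω a :=
        s.piecewise_congr (fun i hi => Function.update_of_ne (ne_of_mem_of_not_mem hi he) _ _)
          fun _ _ => rfl
      have slice_insert (x : ℝ) : (insert e s).piecewise (Function.update ω e x) a
          = Function.update (s.piecewise ω a) e x := by
        rw [Finset.piecewise_insert, slice, Function.update_self]
      intro x ⟨h0, (hx : f _ = 0)⟩ y ⟨_, (hy : f _ = 0)⟩
      rw [Set.mem_preimage, slice] at h0
      rw [slice_insert] at hx hy
      exact hf.subsingleton_update_eq_zero h0 e hx hy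
    filter_upwards [ih, measure_eq_zero_iff_ae_notMem.1 null] with ω hω hω' h0
    exact hω' ⟨hω, h0⟩

lemma IsMultiaffine.measure_pi_lt_abs_elasticity_le (hf : IsMultiaffine f) (hfm : Measurable f)
    {s : ℝ} (hs : 0 ≤ s) {C : ℝ≥0∞} {e : ι}
    (htail : ∀ α β, μ e {x | s * |α * x + β| < |α * x|} ≤ C) :
    Measure.pi μ {ω | s < |elasticity f ω e|} ≤ C := by
  have subset : {ω | s < |elasticity f ω e|}
      ⊆ {ω | s * |f ω| < |f ω - f (Function.update ω e 0)|} := fun ω (hω : s < _) => by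
    rw [hf.elasticity_eq, abs_div] at hω
    rcases eq_or_ne (f ω) 0 with h0 | h0
    · exact absurd hω (by simpa [h0] using hs)
    · exact (lt_div_iff₀ (abs_pos.2 h0)).1 hω
  refine (measure_mono subset).trans <| pi_le_of_forall_update_le
    (measurableSet_lt (by fun_prop) (by fun_prop)) e fun ω => ?_
  obtain ⟨α, β, h⟩ := hf ω e
  simpa [h] using htail α β

end ProductMeasure

section Density

-- An Apollonius disc: the points `s` times closer to `z` than to `0`.
lemma setOf_mul_abs_sub_lt_abs_subset_closedBall {s : ℝ} (hs : 1 < s) (z : ℝ) :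
    {x | s * |x - z| < |x|}
      ⊆ Metric.closedBall (z * s ^ 2 / (s ^ 2 - 1)) (|z| * s / (s ^ 2 - 1)) := by
  intro x (hx : s * |x - z| < |x|)
  have hs2 : 0 < s ^ 2 - 1 := by nlinarith
  have sq_le : s ^ 2 * (x - z) ^ 2 ≤ x ^ 2 := by
    rw [← sq_abs (x - z), ← mul_pow, ← sq_abs x]; gcongr
  rw [Metric.mem_closedBall, Real.dist_eq]
  refine abs_le_of_sq_le_sq (sub_nonpos.1 ?_) (by positivity)
  calc (x - z * s ^ 2 / (s ^ 2 - 1)) ^ 2 - (|z| * s / (s ^ 2 - 1)) ^ 2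
      = (s ^ 2 * (x - z) ^ 2 - x ^ 2) / (s ^ 2 - 1) := by
        rw [div_pow, mul_pow, sq_abs]; field_simp; ring
    _ ≤ 0 := div_nonpos_of_nonpos_of_nonneg (sub_nonpos.2 sq_le) hs2.le

lemma withDensity_mul_abs_sub_lt_abs_le {ρ : ℝ → ℝ} {K : ℝ} (hρ : ∀ x, |x| * ρ x ≤ K) {s : ℝ}
    (hs : 1 < s) (z : ℝ) :
    volume.withDensity (fun x => ENNReal.ofReal (ρ x)) {x | s * |x - z| < |x|}
      ≤ ENNReal.ofReal (2 * K / (s - 1)) := by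
  rcases eq_or_ne z 0 with rfl | hz
  · have empty (x : ℝ) : |x| ≤ s * |x| := le_mul_of_one_le_left (abs_nonneg x) hs.le
    simp [not_lt.2 (empty _)]
  have hK : 0 ≤ K := by simpa using hρ 0
  have : 0 < s ^ 2 - 1 := by nlinarith
  have hmeas : MeasurableSet {x : ℝ | s * |x - z| < |x|} :=
    measurableSet_lt (by fun_prop) (by fun_prop)
  have density_le (x : ℝ) (hx : s * |x - z| < |x|) : ρ x ≤ K * (s + 1) / (|z| * s) := by
    have hx_pos : 0 < |x| := hx.trans_le' (by positivity)
    have abs_x_ge : |z| * s ≤ (s + 1) * |x| := by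
      have := abs_sub_le z x 0
      rw [sub_zero, sub_zero, abs_sub_comm] at this
      nlinarith
    calc ρ x ≤ K / |x| := (le_div_iff₀' hx_pos).2 (hρ x)
      _ ≤ K * (s + 1) / (|z| * s) := by
        rw [div_le_div_iff₀ hx_pos (by positivity), mul_assoc]; gcongr
  rw [withDensity_apply _ hmeas]
  calc ∫⁻ x in {x | s * |x - z| < |x|}, ENNReal.ofReal (ρ x)
      ≤ ∫⁻ _ in {x | s * |x - z| < |x|}, ENNReal.ofReal (K * (s + 1) / (|z| * s)) :=
        setLIntegral_mono' hmeas fun x hx => ENNReal.ofReal_le_ofReal (density_le x hx)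
    _ = ENNReal.ofReal (K * (s + 1) / (|z| * s)) * volume {x : ℝ | s * |x - z| < |x|} :=
        setLIntegral_const _ _
    _ ≤ ENNReal.ofReal (K * (s + 1) / (|z| * s))
          * ENNReal.ofReal (2 * (|z| * s / (s ^ 2 - 1))) := by
        rw [← Real.volume_closedBall (z * s ^ 2 / (s ^ 2 - 1))]
        gcongr
        exact setOf_mul_abs_sub_lt_abs_subset_closedBall hs z
    _ = ENNReal.ofReal (2 * K / (s - 1)) := by
        have hs1 : s - 1 ≠ 0 := by linarith
        rw [← ENNReal.ofReal_mul (by positivity),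
          show s ^ 2 - 1 = (s - 1) * (s + 1) by ring]
        congr 1
        field_simp

lemma withDensity_mul_abs_affine_lt_le {ρ : ℝ → ℝ} {K : ℝ} (hρ : ∀ x, |x| * ρ x ≤ K) {s : ℝ}
    (hs : 1 < s) (α β : ℝ) :
    volume.withDensity (fun x => ENNReal.ofReal (ρ x)) {x | s * |α * x + β| < |α * x|}
      ≤ ENNReal.ofReal (2 * K / (s - 1)) := by
  rcases eq_or_ne α 0 with rfl | hα
  · have : ¬ s * |β| < 0 := not_lt.2 (by positivity)
    simp [this]
  convert withDensity_mul_abs_sub_lt_abs_le hρ hs (-β / α) using 3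
  ext x
  rw [show α * x + β = α * (x - -β / α) by field_simp; ring, abs_mul, abs_mul, mul_left_comm,
    mul_lt_mul_iff_right₀ (abs_pos.2 hα)]

end Density

section Gaussian

lemma abs_mul_gaussianPDFReal_le (m : ℝ) {v : NNReal} (hv : v ≠ 0) (x : ℝ) :
    |x| * gaussianPDFReal m v x ≤ (|m| + √v) / √v / √(2 * Real.pi) := by
  set σ := √(v : ℝ)
  have hσ : 0 < σ := Real.sqrt_pos.2 (NNReal.coe_pos.2 (pos_iff_ne_zero.2 hv))
  set g := |x - m| / σ with hg
  have pdf_eq : gaussianPDFReal m v x = Real.exp (-(g ^ 2 / 2)) / (σ * √(2 * Real.pi)) := by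
    have exponent : -(x - m) ^ 2 / (2 * v) = -(g ^ 2 / 2) := by
      rw [hg, div_pow, sq_abs, Real.sq_sqrt v.coe_nonneg]; field_simp
    simp only [gaussianPDFReal_def]
    rw [exponent, Real.sqrt_mul (by positivity), mul_comm √_, inv_mul_eq_div]
  have abs_x_le : |x| ≤ |m| + σ * g := by
    rw [hg, mul_div_cancel₀ _ hσ.ne']
    simpa using abs_add_le m (x - m)
  have exp_le_one : Real.exp (-(g ^ 2 / 2)) ≤ 1 := Real.exp_le_one_iff.2 (by nlinarith)
  have mul_exp_le_one : g * Real.exp (-(g ^ 2 / 2)) ≤ 1 := by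
    rw [Real.exp_neg, ← div_eq_mul_inv, div_le_one (Real.exp_pos _)]
    nlinarith [Real.add_one_le_exp (g ^ 2 / 2), sq_nonneg (g - 1)]
  have abs_mul_exp_le : |x| * Real.exp (-(g ^ 2 / 2)) ≤ |m| + σ :=
    calc |x| * Real.exp (-(g ^ 2 / 2)) ≤ (|m| + σ * g) * Real.exp (-(g ^ 2 / 2)) := by gcongr
      _ = |m| * Real.exp (-(g ^ 2 / 2)) + σ * (g * Real.exp (-(g ^ 2 / 2))) := by ring
      _ ≤ |m| * 1 + σ * 1 := by gcongr
      _ = |m| + σ := by ring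
  rw [pdf_eq, ← mul_div_assoc, div_div]
  gcongr

theorem gaussianReal_mul_abs_affine_lt_le (m : ℝ) {v : NNReal} (hv : v ≠ 0) {s : ℝ} (hs : 1 < s)
    (α β : ℝ) :
    gaussianReal m v {x | s * |α * x + β| < |α * x|}
      ≤ ENNReal.ofReal ((|m| + √v) / √v * √(2 / Real.pi) / (s - 1)) := by
  have sqrt_eq : √(2 / Real.pi) = 2 / √(2 * Real.pi) := by
    rw [eq_div_iff (by positivity), ← Real.sqrt_mul (by positivity),
      Real.sqrt_eq_iff_mul_self_eq (by positivity) (by positivity)]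
    field_simp
  rw [gaussianReal_of_var_ne_zero _ hv, sqrt_eq]
  exact (withDensity_mul_abs_affine_lt_le (abs_mul_gaussianPDFReal_le m hv) hs α β).trans_eq
    (by ring_nf)

end Gaussian

section LinearSystem

variable {n : ℕ}

lemma pairToFun_funToMat'_funToVec (x : (Fin n × Fin n) ⊕ Fin n → ℝ) :
    pairToFun (funToMat' x) (funToVec x) = x := by
  ext (e | e) <;> rfl

/-- The determinant of the matrix of the linear system `(A, b)` encoded by the point `x`: the
denominator in Cramer's rule. -/
noncomputable def sysDet (x : (Fin n × Fin n) ⊕ Fin n → ℝ) : ℝ :=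
  (funToMat' x).det

/-- The determinant of the matrix `A` with its `k`-th column replaced by `b`, where `(A, b)` is the
linear system encoded by the point `x`: the numerator of the `k`-th unknown in Cramer's rule. -/
noncomputable def cramerNum (k : Fin n) (x : (Fin n × Fin n) ⊕ Fin n → ℝ) : ℝ :=
  (funToMat' x).cramer (funToVec x) k

lemma cramerNum_eq_det (k : Fin n) (x : (Fin n × Fin n) ⊕ Fin n → ℝ) :
    cramerNum k x = (Matrix.of fun i j => x (if j = k then Sum.inr i else Sum.inl (i, j))).det := by
  rw [cramerNum, Matrix.cramer_apply]
  congr 1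
  ext i j
  by_cases h : j = k <;> simp [h, funToMat', funToVec]

lemma inv_mulVec_eq_cramerNum_div_sysDet (k : Fin n) (x : (Fin n × Fin n) ⊕ Fin n → ℝ) :
    ((funToMat' x)⁻¹.mulVec (funToVec x)) k = cramerNum k x / sysDet x := by
  rw [Matrix.inv_def, Matrix.smul_mulVec, ← Matrix.cramer_eq_adjugate_mulVec, Pi.smul_apply,
    Ring.inverse_eq_inv', smul_eq_mul, inv_mul_eq_div]
  rfl

lemma isMultiaffine_sysDet : IsMultiaffine (sysDet (n := n)) :=
  isMultiaffine_det (row := Sum.elim Prod.fst id) fun _ _ => rfl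

lemma isMultiaffine_cramerNum (k : Fin n) : IsMultiaffine (cramerNum k) := by
  rw [funext (cramerNum_eq_det k)]
  exact isMultiaffine_det (row := Sum.elim Prod.fst id) fun _ _ => by split_ifs <;> rfl

lemma differentiable_sysDet : Differentiable ℝ (sysDet (n := n)) := by
  change Differentiable ℝ fun x => (funToMat' x).det
  simp only [Matrix.det_apply', funToMat', Matrix.of_apply]
  fun_prop

lemma differentiable_cramerNum (k : Fin n) : Differentiable ℝ (cramerNum k) := by
  rw [funext (cramerNum_eq_det k)]
  simp only [Matrix.det_apply', Matrix.of_apply]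
  fun_prop

theorem cLin_le_sum_abs_elasticity (k : Fin n) {x : (Fin n × Fin n) ⊕ Fin n → ℝ}
    (hdet : sysDet x ≠ 0) (hnum : cramerNum k x ≠ 0) :
    cLin k (funToMat' x) (funToVec x)
      ≤ ENNReal.ofReal (∑ e, |elasticity (cramerNum k) x e| + ∑ e, |elasticity sysDet x e|) := by
  have hnum_diff := (differentiable_cramerNum k).differentiableAt (x := x)
  have hdet_diff := differentiable_sysDet.differentiableAt (x := x)
  simp only [cLin, inv_mulVec_eq_cramerNum_div_sysDet, pairToFun_funToMat'_funToVec]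
  have hquot_diff : DifferentiableAt ℝ (fun x => cramerNum k x / sysDet x) x := by
    fun_prop (disch := exact hdet)
  refine (cwCond_le_sum_abs_elasticity _ hquot_diff
    (div_ne_zero hnum hdet)).trans (ENNReal.ofReal_le_ofReal ?_)
  simp only [elasticity_div hnum_diff hdet_diff hnum hdet, ← Finset.sum_add_distrib]
  gcongr
  exact abs_sub _ _

lemma elasticity_cramerNum_eq_zero (k i : Fin n) (x : (Fin n × Fin n) ⊕ Fin n → ℝ) :
    elasticity (cramerNum k) x (Sum.inl (i, k)) = 0 := by
  have replaced : cramerNum k (Function.update x (Sum.inl (i, k)) 0) = cramerNum k x := by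
    simp only [cramerNum_eq_det]
    congr! 4 with i' j
    split_ifs with hj
    · rw [Function.update_of_ne (by simp)]
    · rw [Function.update_of_ne (by simp [hj])]
  rw [(isMultiaffine_cramerNum k).elasticity_eq, replaced, sub_self, zero_div]

section LowerTriangular

variable {x : (Fin n × Fin n) ⊕ Fin n → ℝ}

lemma sysDet_of_isLowerTriangular (hx : (funToMat' x).IsLowerTriangular) :
    sysDet x = ∏ i, x (Sum.inl (i, i)) :=
  Matrix.det_of_isLowerTriangular _ hx

lemma isLowerTriangular_update_zero (hx : (funToMat' x).IsLowerTriangular)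
    (e : (Fin n × Fin n) ⊕ Fin n) : (funToMat' (Function.update x e 0)).IsLowerTriangular := by
  intro i j hij
  have := hx hij
  simp_all [funToMat', Function.update_apply]

lemma elasticity_sysDet_inl (hx : (funToMat' x).IsLowerTriangular) (hdet : sysDet x ≠ 0)
    (i j : Fin n) : elasticity sysDet x (Sum.inl (i, j)) = if i = j then 1 else 0 := by
  rw [isMultiaffine_sysDet.elasticity_eq,
    sysDet_of_isLowerTriangular (isLowerTriangular_update_zero hx _)]
  split_ifs with hij
  · subst hij
    rw [Finset.prod_eq_zero (Finset.mem_univ i) (Function.update_self _ _ _), sub_zero,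
      div_self hdet]
  · have off_diag (l : Fin n) : (Sum.inl (l, l) : (Fin n × Fin n) ⊕ Fin n) ≠ Sum.inl (i, j) := by
      simp only [ne_eq, Sum.inl.injEq, Prod.mk.injEq]
      rintro ⟨rfl, rfl⟩
      exact hij rfl
    simp_rw [Function.update_of_ne (off_diag _), ← sysDet_of_isLowerTriangular hx, sub_self,
      zero_div]

lemma elasticity_sysDet_inr (i : Fin n) : elasticity sysDet x (Sum.inr i) = 0 := by
  have unchanged : sysDet (Function.update x (Sum.inr i) 0) = sysDet x := by
    simp [sysDet, funToMat']
  rw [isMultiaffine_sysDet.elasticity_eq, unchanged, sub_self, zero_div]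

lemma sum_abs_elasticity_sysDet (hx : (funToMat' x).IsLowerTriangular) (hdet : sysDet x ≠ 0) :
    ∑ e, |elasticity sysDet x e| = n := by
  rw [Fintype.sum_sum_type, Fintype.sum_prod_type]
  simp [elasticity_sysDet_inl hx hdet, elasticity_sysDet_inr, apply_ite abs]

end LowerTriangular

end LinearSystem

section SparseSystem

variable {n : ℕ} (S : Finset (Fin n × Fin n))

/-- The linear system, encoded as a point of `ℝ^(n×n+n)`, whose matrix has the entries
`ω (Sum.inl p)` at the positions `p ∈ S` and `0` elsewhere, and whose right-hand side has the
entries `ω (Sum.inr i)`. -/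
noncomputable def sparsePoint (ω : S ⊕ Fin n → ℝ) : (Fin n × Fin n) ⊕ Fin n → ℝ :=
  Function.extend (Sum.map Subtype.val id) ω 0

lemma sum_map_val_injective :
    Function.Injective (Sum.map Subtype.val id : S ⊕ Fin n → (Fin n × Fin n) ⊕ Fin n) :=
  Subtype.val_injective.sumMap Function.injective_id

lemma sparsePoint_inl (ω : S ⊕ Fin n → ℝ) (p : Fin n × Fin n) :
    sparsePoint S ω (Sum.inl p) = if h : p ∈ S then ω (Sum.inl ⟨p, h⟩) else 0 := by
  split_ifs with h
  · exact (sum_map_val_injective S).extend_apply ω 0 (Sum.inl ⟨p, h⟩)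
  · refine Function.extend_apply' _ _ _ ?_
    rintro ⟨q | i, hq⟩
    · exact h (Sum.inl_injective hq ▸ q.2)
    · exact Sum.inr_ne_inl hq

lemma sparsePoint_inr (ω : S ⊕ Fin n → ℝ) (i : Fin n) :
    sparsePoint S ω (Sum.inr i) = ω (Sum.inr i) :=
  (sum_map_val_injective S).extend_apply ω 0 (Sum.inr i)

lemma measurable_sparsePoint : Measurable (sparsePoint S) := by
  refine measurable_pi_lambda _ ?_
  rintro (p | i)
  · simp only [sparsePoint_inl]
    split_ifs <;> fun_prop
  · simp only [sparsePoint_inr]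
    fun_prop

lemma injective_sparsePoint : Function.Injective (sparsePoint S) :=
  Function.extend_injective (sum_map_val_injective S) 0

lemma measurableEmbedding_sparsePoint :
    MeasurableEmbedding fun ω => (funToMat' (sparsePoint S ω), funToVec (sparsePoint S ω)) := by
  have : MeasurableSpace.CountablySeparated (Matrix (Fin n) (Fin n) ℝ × (Fin n → ℝ)) :=
    inferInstanceAs (MeasurableSpace.CountablySeparated ((Fin n → Fin n → ℝ) × (Fin n → ℝ)))
  have coord_measurable := measurable_pi_iff.1 (measurable_sparsePoint S)
  refine Measurable.measurableEmbedding (.prodMk ?_ ?_) fun ω ω' h => injective_sparsePoint S ?_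
  · exact measurable_pi_lambda _ fun i => measurable_pi_lambda _ fun j => coord_measurable _
  · exact measurable_pi_lambda _ fun i => coord_measurable _
  · rw [Prod.mk.injEq] at h
    rw [← pairToFun_funToMat'_funToVec (sparsePoint S ω), h.1, h.2, pairToFun_funToMat'_funToVec]

lemma exists_sparsePoint_eq {x : (Fin n × Fin n) ⊕ Fin n → ℝ} (hx : ∀ p ∉ S, x (Sum.inl p) = 0) :
    ∃ ω, sparsePoint S ω = x := by
  refine ⟨x ∘ Sum.map Subtype.val id, funext ?_⟩
  rintro (p | i)
  · rw [sparsePoint_inl]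
    split_ifs with h
    · rfl
    · exact (hx p h).symm
  · exact sparsePoint_inr S _ i

lemma IsMultiaffine.comp_sparsePoint {f : ((Fin n × Fin n) ⊕ Fin n → ℝ) → ℝ}
    (hf : IsMultiaffine f) : IsMultiaffine fun ω => f (sparsePoint S ω) :=
  hf.comp_extend (sum_map_val_injective S) 0

section Gaussian

variable (Abar : Matrix (Fin n) (Fin n) ℝ) (bbar : Fin n → ℝ) {σ : ℝ} {v : NNReal}

lemma measurePreserving_sparseGaussian (hv : (v : ℝ) = σ ^ 2) :
    MeasurePreserving
      (fun g => Matrix.of fun i j => if h : (i, j) ∈ S then g ⟨(i, j), h⟩ else 0)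
      (Measure.pi fun p : S => gaussianReal (Abar p.1.1 p.1.2) v) (sparseGaussian S Abar σ) := by
  refine ⟨measurable_pi_lambda _ fun i => measurable_pi_lambda _ fun j => ?_, ?_⟩
  · simp only [Matrix.of_apply]
    split_ifs <;> fun_prop
  · rw [show v = ⟨σ ^ 2, sq_nonneg σ⟩ from NNReal.eq hv]
    rfl

lemma vecGaussian_eq_pi (hv : (v : ℝ) = σ ^ 2) :
    vecGaussian bbar σ = Measure.pi fun i => gaussianReal (bbar i) v := by
  rw [show v = ⟨σ ^ 2, sq_nonneg σ⟩ from NNReal.eq hv]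
  rfl

lemma measurePreserving_sparsePoint (hv : (v : ℝ) = σ ^ 2) :
    MeasurePreserving
      (fun ω => (funToMat' (sparsePoint S ω), funToVec (sparsePoint S ω)))
      (Measure.pi fun e => gaussianReal (Sum.elim (fun p : S => Abar p.1.1 p.1.2) bbar e) v)
      ((sparseGaussian S Abar σ).prod (vecGaussian bbar σ)) := by
  have mat_preserving := measurePreserving_sparseGaussian S Abar hv
  have : SFinite (sparseGaussian S Abar σ) := mat_preserving.map_eq ▸ inferInstance
  rw [vecGaussian_eq_pi bbar hv]
  convert (mat_preserving.prod (.id _)).comp (measurePreserving_sumPiEquivProdPi fun e =>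
    gaussianReal (Sum.elim (fun p : S => Abar p.1.1 p.1.2) bbar e) v) using 1
  · ext ω i
    · exact sparsePoint_inl S ω _
    · exact sparsePoint_inr S ω i
  · rfl

end Gaussian

end SparseSystem

section TriangularSystem

variable {n : ℕ}

lemma isLowerTriangular_sparsePoint (ω : triPattern n ⊕ Fin n → ℝ) :
    (funToMat' (sparsePoint (triPattern n) ω)).IsLowerTriangular := fun i j hij => by
  have hij' : (i, j) ∉ triPattern n := by simpa [triPattern] using hij
  exact (sparsePoint_inl _ ω (i, j)).trans (dif_neg hij')

lemma card_triPattern_add_le : (triPattern n).card + n ≤ n ^ 2 + 1 := by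
  obtain _ | m := n
  · simp [triPattern]
  have first_row_le : m ≤ (triPattern (m + 1))ᶜ.card := by
    simpa using Finset.card_le_card_of_injOn (s := Finset.univ)
      (fun j : Fin m => ((0 : Fin (m + 1)), j.succ)) (fun j _ => by simp [triPattern])
      (fun i _ j _ h => by simpa using h)
  have card_add_card_compl := Finset.card_add_card_compl (triPattern (m + 1))
  simp only [Fintype.card_prod, Fintype.card_fin, ← pow_two] at card_add_card_compl
  lia

/-- The index of the `k`-th diagonal entry among the random data of a lower triangular system. -/
def diagIndex (k : Fin n) : triPattern n ⊕ Fin n :=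
  Sum.inl ⟨(k, k), by simp [triPattern]⟩

lemma card_erase_diagIndex_le (k : Fin n) :
    (Finset.univ.erase (diagIndex k)).card ≤ n ^ 2 := by
  rw [Finset.card_erase_of_mem (Finset.mem_univ _), Finset.card_univ, Fintype.card_sum,
    Fintype.card_coe, Fintype.card_fin, Nat.sub_le_iff_le_add]
  exact card_triPattern_add_le

lemma exists_sysDet_cramerNum_sparsePoint_ne_zero :
    ∃ ω, sysDet (sparsePoint (triPattern n) ω) ≠ 0
      ∧ ∀ k, cramerNum k (sparsePoint (triPattern n) ω) ≠ 0 := by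
  obtain ⟨ω, hω⟩ := exists_sparsePoint_eq (triPattern n) (x := pairToFun 1 1) fun p hp =>
    Matrix.one_apply_ne fun h => hp (by simp [triPattern, h])
  have mat_eq : funToMat' (pairToFun 1 1) = (1 : Matrix (Fin n) (Fin n) ℝ) := rfl
  have vec_eq : funToVec (pairToFun 1 1) = (1 : Fin n → ℝ) := rfl
  refine ⟨ω, ?_, fun k => ?_⟩ <;> simp [hω, sysDet, cramerNum, mat_eq, vec_eq]

lemma cLin_sparsePoint_le (k : Fin n) {ω : triPattern n ⊕ Fin n → ℝ}
    (hdet : sysDet (sparsePoint _ ω) ≠ 0) (hnum : cramerNum k (sparsePoint _ ω) ≠ 0) {s : ℝ}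
    (hs : 0 ≤ s) (h : ∀ e ∈ Finset.univ.erase (diagIndex k),
      |elasticity (fun ω => cramerNum k (sparsePoint _ ω)) ω e| ≤ s) :
    cLin k (funToMat' (sparsePoint _ ω)) (funToVec (sparsePoint _ ω))
      ≤ ENNReal.ofReal (n ^ 2 * s + n) := by
  refine (cLin_le_sum_abs_elasticity k hdet hnum).trans (ENNReal.ofReal_le_ofReal ?_)
  rw [sum_abs_elasticity_sysDet (isLowerTriangular_sparsePoint ω) hdet]
  gcongr
  have diag_eq_zero :
      |elasticity (fun ω => cramerNum k (sparsePoint (triPattern n) ω)) ω (diagIndex k)| = 0 :=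
    abs_eq_zero.2 <| (elasticity_comp_extend (sum_map_val_injective _) _ _ _ _).trans
      (elasticity_cramerNum_eq_zero k k _)
  calc ∑ e, |elasticity (cramerNum k) (sparsePoint _ ω) e|
      = ∑ e, |elasticity (fun ω => cramerNum k (sparsePoint _ ω)) ω e| :=
        sum_abs_elasticity_extend_zero (sum_map_val_injective _) _ ω
    _ = ∑ e ∈ Finset.univ.erase (diagIndex k),
          |elasticity (fun ω => cramerNum k (sparsePoint _ ω)) ω e| :=
        (Finset.sum_erase (f := fun e => |elasticity _ ω e|) _ diag_eq_zero).symm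
    _ ≤ (Finset.univ.erase (diagIndex k)).card * s := by
        simpa using Finset.sum_le_card_nsmul _ _ s h
    _ ≤ n ^ 2 * s := by gcongr; exact_mod_cast card_erase_diagIndex_le k

variable {μ : triPattern n ⊕ Fin n → Measure ℝ} [∀ e, IsProbabilityMeasure (μ e)]
  [∀ e, NullSingletonClass (μ e)]

lemma ae_cramerNum_sparsePoint_ne_zero (k : Fin n) :
    ∀ᵐ ω ∂Measure.pi μ, cramerNum k (sparsePoint _ ω) ≠ 0 := by
  obtain ⟨ω, -, hω⟩ := exists_sysDet_cramerNum_sparsePoint_ne_zero (n := n)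
  exact ((isMultiaffine_cramerNum k).comp_sparsePoint _).ae_ne_zero
    ((differentiable_cramerNum k).continuous.measurable.comp (measurable_sparsePoint _)) (hω k)

lemma ae_sysDet_sparsePoint_ne_zero :
    ∀ᵐ ω ∂Measure.pi μ, sysDet (sparsePoint _ ω) ≠ 0 := by
  obtain ⟨ω, hω, -⟩ := exists_sysDet_cramerNum_sparsePoint_ne_zero (n := n)
  exact (isMultiaffine_sysDet.comp_sparsePoint _).ae_ne_zero
    (differentiable_sysDet.continuous.measurable.comp (measurable_sparsePoint _)) hω

theorem measure_pi_lt_cLinMax_le {s : ℝ} (hs : 0 ≤ s) {C : ℝ≥0∞}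
    (htail : ∀ e α β, μ e {x | s * |α * x + β| < |α * x|} ≤ C) :
    Measure.pi μ {ω | ENNReal.ofReal (n ^ 2 * s + n)
        < cLinMax (funToMat' (sparsePoint _ ω)) (funToVec (sparsePoint _ ω))} ≤ n ^ 3 * C := by
  let bad (k : Fin n) (e : triPattern n ⊕ Fin n) : Set (triPattern n ⊕ Fin n → ℝ) :=
    {ω | s < |elasticity (fun ω => cramerNum k (sparsePoint _ ω)) ω e|}
  have bad_le (k : Fin n) (e) : Measure.pi μ (bad k e) ≤ C :=
    ((isMultiaffine_cramerNum k).comp_sparsePoint _).measure_pi_lt_abs_elasticity_le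
      ((differentiable_cramerNum k).continuous.measurable.comp (measurable_sparsePoint _)) hs
      (htail e)
  calc _ ≤ Measure.pi μ (⋃ k, ⋃ e ∈ Finset.univ.erase (diagIndex k), bad k e) := by
        refine measure_mono_ae ?_
        filter_upwards [ae_sysDet_sparsePoint_ne_zero,
          ae_all_iff.2 ae_cramerNum_sparsePoint_ne_zero] with ω hdet hnum hω
        obtain ⟨k, hk⟩ := lt_iSup_iff.1 hω
        by_contra good
        refine hk.not_ge (cLin_sparsePoint_le k hdet (hnum k) hs fun e he => not_lt.1 fun hlt => ?_)
        exact good (Set.mem_iUnion.2 ⟨k, Set.mem_biUnion he hlt⟩)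
    _ ≤ ∑ k, ∑ e ∈ Finset.univ.erase (diagIndex k), Measure.pi μ (bad k e) :=
        (measure_iUnion_fintype_le _ _).trans <|
          Finset.sum_le_sum fun k _ => measure_biUnion_finset_le _ _
    _ ≤ ∑ k : Fin n, ((n ^ 2 : ℕ) : ℝ≥0∞) * C := by
        gcongr with k
        refine (Finset.sum_le_card_nsmul _ _ C fun e _ => bad_le k e).trans ?_
        rw [nsmul_eq_mul]
        gcongr
        exact card_erase_diagIndex_le k
    _ = n ^ 3 * C := by
        simp [Finset.sum_const]; ring

theorem prob_lt_cLinMax_triangular_le (Lbar : Matrix (Fin n) (Fin n) ℝ) (bbar : Fin n → ℝ) {M : ℝ}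
    (hL : ∀ i j, |Lbar i j| ≤ M) (hb : ∀ i, |bbar i| ≤ M) {σ : ℝ} (hσ : 0 < σ) {s : ℝ}
    (hs : 1 < s) :
    (sparseGaussian (triPattern n) Lbar σ).prod (vecGaussian bbar σ)
        {p | ENNReal.ofReal (n ^ 2 * s + n) < cLinMax p.1 p.2}
      ≤ n ^ 3 * ENNReal.ofReal ((M + σ) / σ * √(2 / Real.pi) / (s - 1)) := by
  obtain ⟨v, hv⟩ : ∃ v : NNReal, (v : ℝ) = σ ^ 2 := ⟨⟨σ ^ 2, sq_nonneg σ⟩, rfl⟩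
  have v_ne_zero : v ≠ 0 := NNReal.coe_ne_zero.1 (by rw [hv]; positivity)
  have sqrt_v : √(v : ℝ) = σ := by rw [hv, Real.sqrt_sq hσ.le]
  set mean : triPattern n ⊕ Fin n → ℝ := Sum.elim (fun p => Lbar p.1.1 p.1.2) bbar
  have abs_mean_le (e) : |mean e| ≤ M := by rcases e with p | i; exacts [hL _ _, hb i]
  have atomless (e) : NullSingletonClass (gaussianReal (mean e) v) :=
    nullSingletonClass_gaussianReal v_ne_zero
  have htail (e) (α β : ℝ) : gaussianReal (mean e) v {x | s * |α * x + β| < |α * x|}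
      ≤ ENNReal.ofReal ((M + σ) / σ * √(2 / Real.pi) / (s - 1)) := by
    refine (gaussianReal_mul_abs_affine_lt_le (mean e) v_ne_zero hs α β).trans ?_
    rw [sqrt_v]
    gcongr
    exact abs_mean_le e
  rw [← (measurePreserving_sparsePoint _ Lbar bbar hv).measure_preimage_emb
    (measurableEmbedding_sparsePoint _)]
  exact measure_pi_lt_cLinMax_le (by linarith) htail

end TriangularSystem

/-- Let `L̄` be lower triangular with `‖L̄‖_max ≤ 1`, `b̄ ∈ ℝⁿ` with
`‖b̄‖_∞ ≤ 1`, `σ > 0`, and let `L ~ N_T(L̄, σ²Id)` (only the entries `l_{ij}` with `i ≥ j`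
are random Gaussians, the rest are `0`) and `b ~ N(b̄, σ²Id)` be independent. Then for
every real `t > n(n+1)`,
`Prob{c(L,b) > t} ≤ ((1+σ)/σ)·(n³(n+1)²/(t − n(n+1)))·√(2/π)`,
where `c(L,b) = max_k c_k(L,b)`. -/
theorem prob_cLinMax_triangular_gt {n : ℕ}
    (Lbar : Matrix (Fin n) (Fin n) ℝ) (htri : ∀ i j : Fin n, i < j → Lbar i j = 0)
    (hmax : ∀ i j, |Lbar i j| ≤ 1) (bbar : Fin n → ℝ) (hbmax : ∀ i, |bbar i| ≤ 1)
    (σ : ℝ) (hσ : 0 < σ) (t : ℝ) (ht : (n : ℝ) * (n + 1) < t) :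
    (sparseGaussian (triPattern n) Lbar σ).prod (vecGaussian bbar σ)
        {p | ENNReal.ofReal t < cLinMax p.1 p.2}
      ≤ ENNReal.ofReal ((1 + σ) / σ
          * ((n : ℝ) ^ 3 * ((n : ℝ) + 1) ^ 2 / (t - (n : ℝ) * (n + 1)))
          * Real.sqrt (2 / Real.pi)) := by
  rcases eq_or_ne n 0 with rfl | hn
  · simp [cLinMax]
  have gap_pos : 0 < t - n * (n + 1) := sub_pos.2 ht
  set s := (t - n) / (n : ℝ) ^ 2 with s_def
  have t_eq : t = n ^ 2 * s + n := by rw [s_def]; field_simp; ring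
  have s_sub_one : s - 1 = (t - n * (n + 1)) / n ^ 2 := by rw [s_def]; field_simp; ring
  have one_lt_s : 1 < s := sub_pos.1 (s_sub_one ▸ by positivity)
  calc (sparseGaussian (triPattern n) Lbar σ).prod (vecGaussian bbar σ)
        {p | ENNReal.ofReal t < cLinMax p.1 p.2}
      ≤ n ^ 3 * ENNReal.ofReal ((1 + σ) / σ * √(2 / Real.pi) / (s - 1)) :=
        t_eq ▸ prob_lt_cLinMax_triangular_le Lbar bbar hmax hbmax hσ one_lt_s
    _ = ENNReal.ofReal ((1 + σ) / σ * (n ^ 3 * n ^ 2 / (t - n * (n + 1))) * √(2 / Real.pi)) := by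
        rw [← ENNReal.ofReal_natCast, ← ENNReal.ofReal_pow (by positivity),
          ← ENNReal.ofReal_mul (by positivity), s_sub_one]
        congr 1
        field_simp
    _ ≤ ENNReal.ofReal ((1 + σ) / σ * (n ^ 3 * (n + 1) ^ 2 / (t - n * (n + 1)))
          * √(2 / Real.pi)) := by
        gcongr
        linarith
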